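/- The height of the ideal I_2(D) in S equals m − 1. -/

import Mathlib

open MvPolynomial

variable (K : Type*) [Field K]

/-- The binomial `f_{ij} = x_i^{d_i} y_j^{d_j} − x_j^{d_j} y_i^{d_i}` in
`S = K[x_1,…,x_m,y_1,…,y_m]`, where the variable `x_i` is `X (Sum.inl i)` and
`y_i` is `X (Sum.inr i)`. -/
noncomputable def fIJ {m : ℕ} (d : Fin m → ℕ) (i j : Fin m) :
    MvPolynomial (Fin m ⊕ Fin m) K :=
  X (Sum.inl i) ^ d i * X (Sum.inr j) ^ d j - X (Sum.inl j) ^ d j * X (Sum.inr i) ^ d i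

/-- The ideal `I_2(D)` generated by the `2`-minors `f_{ij}`, `i < j`. -/
noncomputable def I2D {m : ℕ} (d : Fin m → ℕ) : Ideal (MvPolynomial (Fin m ⊕ Fin m) K) :=
  Ideal.span {g | ∃ i j : Fin m, i < j ∧ g = fIJ K d i j}

/-- A binomial: a difference of two (monic) monomials. -/
def IsBinom {K : Type*} [Field K] {σ : Type*} (f : MvPolynomial σ K) : Prop :=
  ∃ u v : σ →₀ ℕ, f = monomial u 1 - monomial v 1

/-- The height of an ideal: the infimum of the heights of the prime ideals
containing it. -/
noncomputable def idealHeight {R : Type*} [CommRing R] (I : Ideal R) : ℕ∞ :=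
  ⨅ (p : PrimeSpectrum R) (_ : I ≤ p.asIdeal), Order.height p

/-- Generic-extension map: variables with index in `T` go to their class mod `p`,
the other variables stay free. -/
noncomputable def psiT {m : ℕ} (p : Ideal (MvPolynomial (Fin m ⊕ Fin m) K)) (T : Finset (Fin m)) :
    MvPolynomial (Fin m ⊕ Fin m) K →ₐ[K]
      MvPolynomial (Fin m ⊕ Fin m) (MvPolynomial (Fin m ⊕ Fin m) K ⧸ p) :=
  aeval fun s => if Sum.elim id id s ∈ T then C (Ideal.Quotient.mk p (X s)) else X s

lemma psiT_step {m : ℕ} (p : Ideal (MvPolynomial (Fin m ⊕ Fin m) K)) (T T' : Finset (Fin m))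
    (h : T ⊆ T') : RingHom.ker (psiT K p T) ≤ RingHom.ker (psiT K p T') := by
  intro f hf
  let e : MvPolynomial (Fin m ⊕ Fin m) (MvPolynomial (Fin m ⊕ Fin m) K ⧸ p) →ₐ[
      MvPolynomial (Fin m ⊕ Fin m) K ⧸ p] 
      MvPolynomial (Fin m ⊕ Fin m) (MvPolynomial (Fin m ⊕ Fin m) K ⧸ p) :=
    aeval fun s => if Sum.elim id id s ∈ T' then C (Ideal.Quotient.mk p (X s)) else X s
  have key : (e.restrictScalars K).comp (psiT K p T) = psiT K p T' := by
    apply MvPolynomial.algHom_ext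
    intro s
    simp only [AlgHom.comp_apply, psiT, aeval_X, AlgHom.restrictScalars_apply]
    by_cases h1 : Sum.elim id id s ∈ T
    · rw [if_pos h1, if_pos (h h1)]
      exact e.commutes _
    · rw [if_neg h1]
      simp only [e, aeval_X]
  rw [RingHom.mem_ker] at hf ⊢
  rw [← key, AlgHom.comp_apply, hf, map_zero]

lemma psiT_le {m : ℕ} (p : Ideal (MvPolynomial (Fin m ⊕ Fin m) K)) (T : Finset (Fin m)) :
    RingHom.ker (psiT K p T) ≤ p := by
  intro f hf
  let e : MvPolynomial (Fin m ⊕ Fin m) (MvPolynomial (Fin m ⊕ Fin m) K ⧸ p) →ₐ[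
      MvPolynomial (Fin m ⊕ Fin m) K ⧸ p] (MvPolynomial (Fin m ⊕ Fin m) K ⧸ p) :=
    aeval fun s => (Ideal.Quotient.mk p (X s))
  have key : (e.restrictScalars K).comp (psiT K p T) = Ideal.Quotient.mkₐ K p := by
    apply MvPolynomial.algHom_ext
    intro s
    simp only [AlgHom.comp_apply, psiT, aeval_X, AlgHom.restrictScalars_apply]
    by_cases h1 : Sum.elim id id s ∈ T
    · rw [if_pos h1]
      exact e.commutes _
    · rw [if_neg h1]
      simp only [e, aeval_X]
      rfl
  rw [RingHom.mem_ker] at hf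
  rw [← Ideal.Quotient.eq_zero_iff_mem]
  change Ideal.Quotient.mkₐ K p f = 0
  rw [← key, AlgHom.comp_apply, hf, map_zero]

lemma psiT_X {m : ℕ} (p : Ideal (MvPolynomial (Fin m ⊕ Fin m) K)) (T : Finset (Fin m))
    (s : Fin m ⊕ Fin m) : psiT K p T (X s) =
      if Sum.elim id id s ∈ T then C (Ideal.Quotient.mk p (X s)) else X s := by
  simp [psiT]

lemma fIJ_mem {m : ℕ} (d : Fin m → ℕ) (p : Ideal (MvPolynomial (Fin m ⊕ Fin m) K))
    (h : I2D K d ≤ p) (i j : Fin m) : fIJ K d i j ∈ p := by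
  rcases lt_trichotomy i j with hij | rfl | hij
  · exact h (Ideal.subset_span ⟨i, j, hij, rfl⟩)
  · simp [fIJ]
  · have : fIJ K d i j = - fIJ K d j i := by simp only [fIJ]; ring
    rw [this]
    exact p.neg_mem (h (Ideal.subset_span ⟨j, i, hij, rfl⟩))

lemma psiT_lt {m : ℕ} (d : Fin m → ℕ) (hd : ∀ i, 0 < d i)
    (p : Ideal (MvPolynomial (Fin m ⊕ Fin m) K)) [hp : p.IsPrime] (h : I2D K d ≤ p)
    (i : Fin m) (hi : (X (Sum.inl i) ∉ p ∨ X (Sum.inr i) ∉ p) ∨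
      ∀ j : Fin m, X (Sum.inl j) ∈ p) (T : Finset (Fin m)) (hiT : i ∈ T) (j : Fin m) (hj : j ∉ T) :
    RingHom.ker (psiT K p T) < RingHom.ker (psiT K p (insert j T)) := by
  refine lt_of_le_of_ne (psiT_step K p _ _ (Finset.subset_insert _ _)) fun heq => ?_
  rcases hi with hi | hi
  · have hf : fIJ K d i j ∈ RingHom.ker (psiT K p (insert j T)) := by
      have h0 := Ideal.Quotient.eq_zero_iff_mem.2 (fIJ_mem K d p h i j)
      rw [RingHom.mem_ker]
      have h1 := congrArg (C : _ →+* MvPolynomial (Fin m ⊕ Fin m) 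
        (MvPolynomial (Fin m ⊕ Fin m) K ⧸ p)) h0
      simp only [fIJ, map_sub, map_mul, map_pow, map_zero] at h1
      simp only [fIJ, map_sub, map_mul, map_pow, psiT_X, Sum.elim_inl, Sum.elim_inr, id,
        Finset.mem_insert_self, Finset.mem_insert_of_mem hiT, if_true]
      exact h1
    rw [← heq, RingHom.mem_ker] at hf
    simp only [fIJ, map_sub, map_mul, map_pow, psiT_X, Sum.elim_inl, Sum.elim_inr, id,
        hiT, hj, if_true, if_false] at hf
    have dj : d j ≠ 0 := (hd j).ne'
    have h1 := congrArg (eval (Sum.elim (fun _ => 0) (fun _ => 1))) hf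
    have h2 := congrArg (eval (Sum.elim (fun _ => 1) (fun _ => 0))) hf
    simp only [map_sub, map_mul, map_pow, eval_C, eval_X, Sum.elim_inl, Sum.elim_inr, one_pow,
      zero_pow dj, mul_one, one_mul, mul_zero, zero_mul, sub_zero, zero_sub, map_zero,
      neg_eq_zero] at h1 h2
    rw [← map_pow, Ideal.Quotient.eq_zero_iff_mem] at h1 h2
    rcases hi with hi | hi
    · exact hi (hp.mem_of_pow_mem _ h1)
    · exact hi (hp.mem_of_pow_mem _ h2)
  · have hf : X (Sum.inl j) ∈ RingHom.ker (psiT K p (insert j T)) := by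
      rw [RingHom.mem_ker, psiT_X, if_pos (by simp), Ideal.Quotient.eq_zero_iff_mem.2 (hi j),
        map_zero]
    rw [← heq, RingHom.mem_ker, psiT_X, if_neg (by simpa using hj)] at hf
    exact X_ne_zero _ hf

lemma height_lower {m : ℕ} (hm : 2 ≤ m) (d : Fin m → ℕ) (hd : ∀ i, 0 < d i)
    (p : Ideal (MvPolynomial (Fin m ⊕ Fin m) K)) [hp : p.IsPrime] (h : I2D K d ≤ p) :
    ((m - 1 : ℕ) : ℕ∞) ≤ p.height := by
  obtain ⟨i, hi⟩ : ∃ i : Fin m, (X (Sum.inl i) ∉ p ∨ X (Sum.inr i) ∉ p) ∨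
      ∀ j : Fin m, X (Sum.inl j) ∈ p := by
    by_cases hall : ∀ j : Fin m, X (Sum.inl j) ∈ p
    · exact ⟨⟨0, by omega⟩, Or.inr hall⟩
    · push Not at hall
      obtain ⟨i, hi⟩ := hall
      exact ⟨i, Or.inl (Or.inl hi)⟩
  have key : ∀ U : Finset (Fin m), i ∉ U →
      (U.card : ℕ∞) ≤ (RingHom.ker (psiT K p (insert i U))).height := by
    intro U
    induction U using Finset.induction_on with
    | empty => simp
    | insert j U hj ih =>
      intro hiU
      rw [Finset.mem_insert, not_or] at hiU
      have hlt := psiT_lt K d hd p h i hi (insert i U) (Finset.mem_insert_self _ _) j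
        (by simp [hj, Ne.symm hiU.1])
      rw [Finset.insert_comm] at hlt
      have p1 := RingHom.ker_isPrime (psiT K p (insert i U))
      have p2 := RingHom.ker_isPrime (psiT K p (insert i (insert j U)))
      have := Ideal.height_add_one_le_of_lt_of_isPrime hlt
      rw [Finset.card_insert_of_notMem hj]
      push_cast
      exact (add_le_add_left (ih hiU.2) 1).trans this
  have := key (Finset.univ.erase i) (by simp)
  rw [Finset.card_erase_of_mem (Finset.mem_univ _), Finset.card_univ, Fintype.card_fin] at this
  exact this.trans (Ideal.height_mono (psiT_le K p _))

lemma height_upper {m : ℕ} (hm : 2 ≤ m) (d : Fin m → ℕ) (hd : ∀ i, 0 < d i) :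
    ∃ p : Ideal (MvPolynomial (Fin m ⊕ Fin m) K), p.IsPrime ∧ I2D K d ≤ p ∧
      p.height ≤ (m - 1 : ℕ) := by
  classical
  let o : Fin m := ⟨0, by omega⟩
  let s : Finset (MvPolynomial (Fin m ⊕ Fin m) K) :=
    (Finset.univ.erase o).image (fIJ K d o)
  let ev : MvPolynomial (Fin m ⊕ Fin m) K →+* K := eval (Sum.elim (fun _ => 1) (fun _ => 0))
  have hq : (RingHom.ker ev).IsPrime := RingHom.ker_isPrime ev
  have hle : Ideal.span (s : Set (MvPolynomial (Fin m ⊕ Fin m) K)) ≤ RingHom.ker ev := by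
    rw [Ideal.span_le]
    intro g hg
    simp only [s, Finset.coe_image, Set.mem_image] at hg
    obtain ⟨j, -, rfl⟩ := hg
    simp [RingHom.mem_ker, ev, fIJ, (hd _).ne']
  obtain ⟨p, hp, hpq⟩ := Ideal.exists_minimalPrimes_le hle
  have hpp : p.IsPrime := hp.1.1
  have hx : X (Sum.inl o) ∉ p := fun hmem => by
    have := hpq hmem
    simp [RingHom.mem_ker, ev] at this
  have hg : ∀ j, fIJ K d o j ∈ p := by
    intro j
    by_cases hj : j = o
    · rw [hj]; simp [fIJ]
    · exact hp.1.2 (Ideal.subset_span (by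
        simp only [s, Finset.coe_image]
        exact ⟨j, by simp [hj], rfl⟩))
  refine ⟨p, hpp, ?_, ?_⟩
  · rw [I2D, Ideal.span_le]
    rintro g ⟨i, j, -, rfl⟩
    have : X (Sum.inl o) ^ d o * fIJ K d i j ∈ p := by
      have e : X (Sum.inl o) ^ d o * fIJ K d i j =
          X (Sum.inl i) ^ d i * fIJ K d o j - X (Sum.inl j) ^ d j * fIJ K d o i := by
        simp only [fIJ]; ring
      rw [e]
      exact p.sub_mem (p.mul_mem_left _ (hg j)) (p.mul_mem_left _ (hg i))
    exact (hpp.mem_or_mem this).resolve_left fun h => hx (hpp.mem_of_pow_mem _ h)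
  · refine (Ideal.height_le_card_of_mem_minimalPrimes_span_finset hp).trans ?_
    have : s.card ≤ m - 1 := by
      refine Finset.card_image_le.trans ?_
      rw [Finset.card_erase_of_mem (Finset.mem_univ _), Finset.card_univ, Fintype.card_fin]
    exact_mod_cast this

theorem stmt11 (m : ℕ) (hm : 2 ≤ m) (d : Fin m → ℕ) (hd : ∀ i, 0 < d i) :
    idealHeight (I2D K d) = (m - 1 : ℕ) := by
  apply le_antisymm
  · obtain ⟨p, hp, hI, hh⟩ := height_upper K hm d hd
    refine (iInf₂_le (⟨p, hp⟩ : PrimeSpectrum _) hI).trans ?_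
    rw [← PrimeSpectrum.height_eq_orderHeight]
    exact hh
  · refine le_iInf₂ fun p hI => ?_
    rw [← PrimeSpectrum.height_eq_orderHeight]
    exact height_lower K hm d hd p.asIdeal hI
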